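/- Define P(t) = [e^{2t}(t³ − 12t² + 54t − 86) − e^t(t³ − 12t² + 16t − 160) − 26t − 74]/(e^t − 1) and Q(t) = 2e^{2t} − e^t(t² − 6t + 18) + 8(t + 2). Then the function t ↦ P(t)/Q(t) is strictly decreasing on (0,∞). -/

import Mathlib

/-- `P(t)` as in the paper. -/
noncomputable def P (t : ℝ) : ℝ :=
  (Real.exp (2 * t) * (t ^ 3 - 12 * t ^ 2 + 54 * t - 86) -
      Real.exp t * (t ^ 3 - 12 * t ^ 2 + 16 * t - 160) - 26 * t - 74) /
    (Real.exp t - 1)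

/-- `Q(t)` as in the paper. -/
noncomputable def Q (t : ℝ) : ℝ :=
  2 * Real.exp (2 * t) - Real.exp t * (t ^ 2 - 6 * t + 18) + 8 * (t + 2)

/-- `n!` times the `n`-th Taylor coefficient of `(p0 + p1 t + ... + p4 t^4) e^{kt}`. -/
def tc (k : ℕ) (p0 p1 p2 p3 p4 : ℤ) (n : ℕ) : ℤ :=
  p0 * (k : ℤ) ^ n + p1 * ((n.descFactorial 1 : ℕ) * (k : ℤ) ^ (n - 1))
    + p2 * ((n.descFactorial 2 : ℕ) * (k : ℤ) ^ (n - 2))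
    + p3 * ((n.descFactorial 3 : ℕ) * (k : ℤ) ^ (n - 3))
    + p4 * ((n.descFactorial 4 : ℕ) * (k : ℤ) ^ (n - 4))

theorem hasSum_congr_real {f g : ℕ → ℝ} {a b : ℝ} (h : HasSum f a) (h1 : ∀ n, g n = f n)
    (h2 : b = a) : HasSum g b := by
  obtain rfl : g = f := funext h1
  rw [h2]
  exact h

theorem hasSum_monomial (k t : ℝ) (i : ℕ) :
    HasSum (fun n : ℕ => ((n.descFactorial i : ℕ) * k ^ (n - i)) * (t ^ n / (n.factorial : ℝ)))
      (t ^ i * Real.exp (k * t)) := by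
  have h := (hasSum_nat_add_iff (f := fun n : ℕ =>
    (((n.descFactorial i : ℕ) : ℝ) * k ^ (n - i)) * (t ^ n / (n.factorial : ℝ))) i
    (g := t ^ i * Real.exp (k * t))).1 ?_
  · rw [Finset.sum_eq_zero, add_zero] at h
    · exact h
    · intro n hn
      rw [Nat.descFactorial_of_lt (Finset.mem_range.1 hn)]
      simp
  · have h1 : HasSum (fun n : ℕ => (k * t) ^ n / (n.factorial : ℝ)) (Real.exp (k * t)) := by
      rw [Real.exp_eq_exp_ℝ]
      exact NormedSpace.expSeries_div_hasSum_exp (k * t)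
    refine hasSum_congr_real (h1.mul_left (t ^ i)) (fun n => ?_) rfl
    have h2 := Nat.factorial_mul_descFactorial (Nat.le_add_left i n)
    rw [Nat.add_sub_cancel] at h2 ⊢
    have h3 : ((n + i).factorial : ℝ) = n.factorial * ((n + i).descFactorial i : ℕ) := by
      exact_mod_cast h2.symm
    have h4 : (n.factorial : ℝ) ≠ 0 := by positivity
    have h5 : ((n + i).factorial : ℝ) ≠ 0 := by positivity
    rw [mul_pow, pow_add]
    field_simp
    rw [h3]
    ring

theorem hasSum_tc (k : ℕ) (p0 p1 p2 p3 p4 : ℤ) (t : ℝ) :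
    HasSum (fun n : ℕ => (tc k p0 p1 p2 p3 p4 n : ℝ) * (t ^ n / (n.factorial : ℝ)))
      ((p0 + p1 * t + p2 * t ^ 2 + p3 * t ^ 3 + p4 * t ^ 4) * Real.exp (k * t)) := by
  have h := ((((((hasSum_monomial k t 0).mul_left (p0 : ℝ)).add
    ((hasSum_monomial k t 1).mul_left (p1 : ℝ))).add
    ((hasSum_monomial k t 2).mul_left (p2 : ℝ))).add
    ((hasSum_monomial k t 3).mul_left (p3 : ℝ))).add
    ((hasSum_monomial k t 4).mul_left (p4 : ℝ)))
  refine hasSum_congr_real h (fun n => ?_) ?_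
  · simp only [tc, Nat.descFactorial_zero]
    push_cast
    simp only [Nat.sub_zero]
    ring
  · ring

theorem series_pos (a : ℕ → ℤ) (S t : ℝ) (ht : 0 < t)
    (h : HasSum (fun n : ℕ => (a n : ℝ) * (t ^ n / (n.factorial : ℝ))) S)
    (ha : ∀ n, 0 ≤ a n) (m : ℕ) (hm : 0 < a m) : 0 < S := by
  have h1 := le_hasSum h m (fun n _ => by
    have : (0 : ℝ) ≤ a n := by exact_mod_cast ha n
    positivity)
  have : (0 : ℝ) < a m := by exact_mod_cast hm
  exact lt_of_lt_of_le (by positivity) h1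

def aQ (n : ℕ) : ℤ := tc 2 2 0 0 0 0 n + tc 1 (-18) 6 (-1) 0 0 n + tc 0 16 8 0 0 0 n

def aW (n : ℕ) : ℤ := tc 0 176 0 0 0 0 n + tc 1 (-756) 228 (-40) 38 (-8) n
  + tc 2 1660 (-228) 356 (-88) 17 n + tc 3 (-2036) 264 (-250) 52 (-10) n
  + tc 4 1236 (-420) 132 (-16) 1 n + tc 5 (-280) 156 (-30) 2 0 n

theorem descF (m c : ℕ) : (((m + (c + 4)).descFactorial 1 : ℕ) : ℤ) = m + c + 4 ∧
    (((m + (c + 4)).descFactorial 2 : ℕ) : ℤ) = (m + c + 4) * (m + c + 3) ∧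
    (((m + (c + 4)).descFactorial 3 : ℕ) : ℤ) = (m + c + 4) * (m + c + 3) * (m + c + 2) ∧
    (((m + (c + 4)).descFactorial 4 : ℕ) : ℤ)
      = (m + c + 4) * (m + c + 3) * (m + c + 2) * (m + c + 1) := by
  have e1 : m + (c + 4) - 1 = m + c + 3 := by omega
  have e2 : m + (c + 4) - 2 = m + c + 2 := by omega
  have e3 : m + (c + 4) - 3 = m + c + 1 := by omega
  refine ⟨?_, ?_, ?_, ?_⟩ <;>
  · simp only [Nat.descFactorial_succ, Nat.descFactorial_zero, e1, e2, e3, Nat.sub_zero]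
    push_cast
    ring

theorem tc_shift (k : ℕ) (p0 p1 p2 p3 p4 : ℤ) (c m : ℕ) :
    tc k p0 p1 p2 p3 p4 (m + (c + 4)) = (k : ℤ) ^ m * ((k : ℤ) ^ c * (p0 * k ^ 4
      + p1 * (m + c + 4) * k ^ 3 + p2 * ((m + c + 4) * (m + c + 3)) * k ^ 2
      + p3 * ((m + c + 4) * (m + c + 3) * (m + c + 2)) * k
      + p4 * ((m + c + 4) * (m + c + 3) * (m + c + 2) * (m + c + 1)))) := by
  obtain ⟨d1, d2, d3, d4⟩ := descF m c
  have e1 : m + (c + 4) - 1 = m + c + 3 := by omega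
  have e2 : m + (c + 4) - 2 = m + c + 2 := by omega
  have e3 : m + (c + 4) - 3 = m + c + 1 := by omega
  have e4 : m + (c + 4) - 4 = m + c := by omega
  simp only [tc, d1, d2, d3, d4, e1, e2, e3, e4]
  ring

theorem aQ_nonneg (n : ℕ) : 0 ≤ aQ n := by
  by_cases hn : n < 8
  · interval_cases n <;> decide
  · obtain ⟨m, rfl⟩ : ∃ m, n = m + (4 + 4) := ⟨n - 8, by omega⟩
    simp only [aQ, tc_shift]
    have h2 : (m : ℤ) * m + 1 ≤ 2 * 2 ^ m ∧ (m : ℤ) + 1 ≤ 2 ^ m ∨ m < 8 := by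
      by_cases h : m < 8
      · right; exact h
      · left
        have h8 : 8 ≤ m := by omega
        clear h hn
        induction m, h8 using Nat.le_induction with
        | base => norm_num
        | succ m hm ih =>
          push_cast
          rw [pow_succ]
          have : (8 : ℤ) ≤ m := by exact_mod_cast hm
          constructor <;> nlinarith [ih.1, ih.2]
    rcases h2 with h2 | h2
    · push_cast
      norm_num
      nlinarith [h2.1, h2.2]
    · interval_cases m <;> norm_num

theorem aW_nonneg (n : ℕ) : 0 ≤ aW n := by
  by_cases hn : n < 40
  · interval_cases n <;> decide
  · obtain ⟨m, rfl⟩ : ∃ m, n = m + (36 + 4) := ⟨n - 40, by omega⟩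
    simp only [aW, tc_shift]
    have h1 : (1 : ℤ) ≤ 2 ^ m := one_le_pow₀ (by norm_num)
    have h34 : (3 : ℤ) ^ m ≤ 4 ^ m := pow_le_pow_left₀ (by norm_num) (by norm_num) m
    have h3 : (0 : ℤ) < 3 ^ m := by positivity
    have h5 : (0 : ℤ) < 5 ^ m := by positivity
    push_cast
    have hm : (0 : ℤ) ≤ m := by positivity
    generalize (m : ℤ) = x at hm ⊢
    have key : ∀ A B C D E y2 y3 y4 y5 : ℤ, 1 ≤ y2 → y3 ≤ y4 → 0 < y3 → 0 < y5 → 0 ≤ A →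
        0 ≤ B → 0 ≤ B + C → 0 ≤ D → 0 ≤ D + E →
        0 ≤ 0 + E + y2 * D + y3 * C + y4 * B + y5 * A := by
      intro A B C D E y2 y3 y4 y5 g1 g2 g3 g4 g5 g6 g7 g8 g9
      nlinarith [mul_nonneg g4.le g5, mul_nonneg (sub_nonneg.2 g2) g6, mul_nonneg g3.le g7,
        mul_nonneg (sub_nonneg.2 g1) g8]
    rw [one_pow, one_mul, zero_mul, mul_zero]
    refine key _ _ _ _ _ _ _ _ _ h1 h34 h3 h5 ?_ ?_ ?_ ?_ ?_
    all_goals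
      ring_nf
      positivity

theorem Q_pos (t : ℝ) (ht : 0 < t) : 0 < Q t := by
  refine series_pos aQ (Q t) t ht ?_ aQ_nonneg 3 (by decide)
  have h := ((hasSum_tc 2 2 0 0 0 0 t).add (hasSum_tc 1 (-18) 6 (-1) 0 0 t)).add
    (hasSum_tc 0 16 8 0 0 0 t)
  refine hasSum_congr_real h (fun n => ?_) ?_
  · simp only [aQ]
    push_cast
    ring
  · simp only [Q]
    push_cast
    rw [zero_mul, Real.exp_zero, one_mul]
    ring

theorem W_pos (t : ℝ) (ht : 0 < t) : 0 < 176 + (-756 + 228 * t - 40 * t ^ 2 + 38 * t ^ 3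
      - 8 * t ^ 4) * Real.exp t
    + (1660 - 228 * t + 356 * t ^ 2 - 88 * t ^ 3 + 17 * t ^ 4) * Real.exp t ^ 2
    + (-2036 + 264 * t - 250 * t ^ 2 + 52 * t ^ 3 - 10 * t ^ 4) * Real.exp t ^ 3
    + (1236 - 420 * t + 132 * t ^ 2 - 16 * t ^ 3 + t ^ 4) * Real.exp t ^ 4
    + (-280 + 156 * t - 30 * t ^ 2 + 2 * t ^ 3) * Real.exp t ^ 5 := by
  refine series_pos aW _ t ht ?_ aW_nonneg 8 (by decide)
  have h := (((((hasSum_tc 0 176 0 0 0 0 t).add (hasSum_tc 1 (-756) 228 (-40) 38 (-8) t)).add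
    (hasSum_tc 2 1660 (-228) 356 (-88) 17 t)).add (hasSum_tc 3 (-2036) 264 (-250) 52 (-10) t)).add
    (hasSum_tc 4 1236 (-420) 132 (-16) 1 t)).add (hasSum_tc 5 (-280) 156 (-30) 2 0 t)
  refine hasSum_congr_real h (fun n => ?_) ?_
  · simp only [aW]
    push_cast
    ring
  · simp only [Real.exp_nat_mul]
    push_cast
    ring

theorem stmt_14 : StrictAntiOn (fun t : ℝ => P t / Q t) (Set.Ioi 0) := by
  let N : ℝ → ℝ := fun t => Real.exp t ^ 2 * (t ^ 3 - 12 * t ^ 2 + 54 * t - 86) -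
      Real.exp t * (t ^ 3 - 12 * t ^ 2 + 16 * t - 160) - 26 * t - 74
  let D : ℝ → ℝ := fun t => (Real.exp t - 1) *
    (2 * Real.exp t ^ 2 - Real.exp t * (t ^ 2 - 6 * t + 18) + 8 * (t + 2))
  have e2 : ∀ t : ℝ, Real.exp (2 * t) = Real.exp t ^ 2 := fun t => by
    rw [← Real.exp_nat_mul]; norm_num
  have hf : (fun t : ℝ => P t / Q t) = fun t => N t / D t := by
    funext t
    simp only [P, Q, N, D, div_div, e2]
  have hD : ∀ t : ℝ, 0 < t → 0 < D t := by
    intro t ht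
    have h1 := Q_pos t ht
    have h2 : 0 < Real.exp t - 1 := by
      have := Real.add_one_lt_exp ht.ne'
      linarith
    simp only [Q, e2] at h1
    exact mul_pos h2 h1
  rw [hf]
  have hd : ∀ t : ℝ, 0 < t → ∃ f' : ℝ, HasDerivAt (fun t => N t / D t) f' t ∧ f' < 0 := by
    intro t ht
    have he := Real.hasDerivAt_exp t
    have hi := hasDerivAt_id' t
    have hN := (((((he.fun_pow 2).fun_mul ((((hi.fun_pow 3).fun_sub ((hi.fun_pow 2).const_mul 12)).fun_add
      (hi.const_mul 54)).sub_const 86))).fun_sub (he.fun_mul ((((hi.fun_pow 3).fun_sub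
      ((hi.fun_pow 2).const_mul 12)).fun_add (hi.const_mul 16)).sub_const 160))).fun_sub
      (hi.const_mul 26)).sub_const 74
    have hDd := (he.sub_const 1).fun_mul ((((he.fun_pow 2).const_mul 2).fun_sub (he.fun_mul
      (((hi.fun_pow 2).fun_sub (hi.const_mul 6)).add_const 18))).fun_add
      ((hi.add_const 2).const_mul 8))
    refine ⟨_, HasDerivAt.fun_div (c := N) (d := D) hN hDd (hD t ht).ne', ?_⟩
    apply div_neg_of_neg_of_pos
    · have := W_pos t ht
      simp only [N, D]
      norm_num
      nlinarith [this]
    · exact pow_pos (hD t ht) 2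
  apply strictAntiOn_of_deriv_neg (convex_Ioi 0)
  · intro t ht
    obtain ⟨f', h, _⟩ := hd t ht
    exact h.continuousAt.continuousWithinAt
  · intro t ht
    rw [interior_Ioi] at ht
    obtain ⟨f', h, h'⟩ := hd t ht
    rw [h.deriv]
    exact h'
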